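/- arXiv:2101.09950 — 2 statements merged into one kernel-verified Lean document; each statement's English description precedes it below -/
import Mathlib

section
/- For every infinite cardinal λ there exists a unital real Banach algebra A having a dense subset of cardinality at most 2^λ such that for every real Banach space E having a dense subset of cardinality at most λ, A is not isomorphic as a ring to the Calkin algebra B(E)/K(E). -/
open Cardinal

/-- The two-sided ideal of compact operators in `B(E)`, the algebra of bounded linear
operators on `E`. -/
def compactIdeal (𝕜 : Type*) [NontriviallyNormedField 𝕜]
    (E : Type*) [NormedAddCommGroup E] [NormedSpace 𝕜 E] : TwoSidedIdeal (E →L[𝕜] E) :=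
  TwoSidedIdeal.mk' {f : E →L[𝕜] E | IsCompactOperator f}
    isCompactOperator_zero
    (fun hf hg => hf.add hg)
    (fun hf => hf.neg)
    (fun {f _} hg => hg.clm_comp f)
    (fun {_ g} hf => hf.comp_clm g)

/-- The Calkin algebra `B(E)/K(E)`, as a quotient ring. -/
def Calkin (𝕜 : Type*) [NontriviallyNormedField 𝕜]
    (E : Type*) [NormedAddCommGroup E] [NormedSpace 𝕜 E] : Type _ :=
  (compactIdeal 𝕜 E).ringCon.Quotient

noncomputable instance (𝕜 : Type*) [NontriviallyNormedField 𝕜]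
    (E : Type*) [NormedAddCommGroup E] [NormedSpace 𝕜 E] : Ring (Calkin 𝕜 E) :=
  inferInstanceAs (Ring (compactIdeal 𝕜 E).ringCon.Quotient)

/-- A bundled unital real Banach algebra. -/
structure BundledBanachAlgebra : Type (u + 1) where
  carrier : Type u
  [normedRing : NormedRing carrier]
  [normedAlgebra : NormedAlgebra ℝ carrier]
  [complete : CompleteSpace carrier]

attribute [instance] BundledBanachAlgebra.normedRing BundledBanachAlgebra.normedAlgebra
  BundledBanachAlgebra.complete

/-!
The algebra is found by counting. An independent family of `2 ^ λ` subsets of a set `X` of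
cardinality `λ` gives `2 ^ (2 ^ λ)` distinct closed subalgebras of `ℓ^∞(X, ℝ)`, all containing the
point masses: the bounded functions converging along suitable filters on `X`. These algebras are
rigid. Since `ℝ` has no ring endomorphism but the identity, a ring homomorphism to `ℝ` that is `1`
on the point mass at `x` is evaluation at `x`, so two of the algebras isomorphic to the same ring
`R` with the same images of the point masses coincide. At most `2 ^ λ` rings with at most `2 ^ λ`
elements each therefore account for at most `2 ^ λ` of the algebras.

By Hahn–Banach, a Banach space of density at most `λ` is isometric to a closed subspace of
`ℓ^∞(X)` of density at most `λ`. There are at most `2 ^ λ` such subspaces, and each has at most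
`2 ^ λ` bounded operators, because an operator is determined by its values on a dense set.
-/

namespace CalkinCounting

open Cardinal Filter Function Set Topology
open scoped ENNReal lp

universe u

section IndependentFamily

variable {ι X Y : Type*}

/-- An independent family of subsets of `X`, modulo finite sets: every pattern of membership
prescribed at finitely many indices is realised by infinitely many points. -/
def IsIndependent (I : ι → Set X) : Prop :=
  ∀ (P : Set ι) (t : Set ι), t.Finite → {x | ∀ i ∈ t, x ∈ I i ↔ i ∈ P}.Infinite

theorem IsIndependent.preimage {I : ι → Set X} (hI : IsIndependent I) (e : Y ≃ X) :
    IsIndependent fun i ↦ e ⁻¹' I i := fun P t ht ↦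
  (hI P t ht).preimage (by simp [e.surjective.range_eq])

theorem exists_finite_separating {α : Type*} {t : Set (Set α)} (ht : t.Finite) :
    ∃ F₀ : Finset α, ∀ S ∈ t, ∀ T ∈ t, (∀ a ∈ F₀, a ∈ S ↔ a ∈ T) → S = T := by
  classical
  have hsep : ∀ S T : Set α, ∃ F : Finset α, (∀ a ∈ F, a ∈ S ↔ a ∈ T) → S = T := by
    intro S T
    by_cases hST : S = T
    · exact ⟨∅, fun _ ↦ hST⟩
    · obtain ⟨a, ha⟩ := not_forall.1 (mt Set.ext hST)
      exact ⟨{a}, fun h ↦ absurd (h a (Finset.mem_singleton_self a)) ha⟩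
  choose F hF using hsep
  refine ⟨(ht.toFinset ×ˢ ht.toFinset).biUnion fun p ↦ F p.1 p.2, fun S hS T hT h ↦
    hF S T fun a ha ↦ h a ?_⟩
  exact Finset.mem_biUnion.2 ⟨(S, T), by simp [hS, hT], ha⟩

/-- The Fichtenholz–Kantorovich–Hausdorff independent family, indexed by the subsets of `α`: a
pair `(F, 𝒢)` lies in the member at `T` when the trace of `T` on `F` belongs to `𝒢`. -/
def traceFamily (α : Type*) (T : Set α) : Set (Finset α × Finset (Finset α)) :=
  {p | ∃ G ∈ p.2, (G : Set α) = T ∩ p.1}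

theorem isIndependent_traceFamily (α : Type*) [Infinite α] : IsIndependent (traceFamily α) := by
  classical
  intro P t ht
  obtain ⟨F₀, hF₀⟩ := exists_finite_separating ht
  let traces (F : Finset α) : Finset (Finset α) :=
    {T ∈ ht.toFinset | T ∈ P}.image fun T ↦ {a ∈ F | a ∈ T}
  have : NoMaxOrder (Finset α) := ⟨fun F ↦
    have ⟨a, ha⟩ := F.exists_notMem
    ⟨insert a F, Finset.ssubset_insert ha⟩⟩
  refine ((Ici_infinite F₀).image (f := fun F ↦ (F, traces F))
    fun F _ F' _ h ↦ congrArg Prod.fst h).mono ?_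
  rintro _ ⟨F, hF : F₀ ⊆ F, rfl⟩ T hT
  constructor
  · rintro ⟨G, hG, hGT⟩
    obtain ⟨T', hT', rfl⟩ := Finset.mem_image.1 hG
    obtain ⟨hT't, hT'P⟩ : T' ∈ t ∧ T' ∈ P := by simpa using hT'
    have hagree : ∀ a ∈ F₀, a ∈ T ↔ a ∈ T' := fun a ha ↦ by
      simpa [hF ha, eq_comm] using congrArg (a ∈ ·) hGT
    rwa [hF₀ T hT T' hT't hagree]
  · intro hTP
    exact ⟨{a ∈ F | a ∈ T}, Finset.mem_image.2 ⟨T, by simp [hT, hTP], rfl⟩,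
      by ext; simp [and_comm]⟩

theorem exists_isIndependent (α : Type u) [Infinite α] :
    ∃ I : Set α → Set α, IsIndependent I := by
  have hcard : #α = #(Finset α × Finset (Finset α)) := by
    simp [mk_finset_of_infinite, mul_eq_self (aleph0_le_mk α)]
  obtain ⟨e⟩ := Cardinal.eq.1 hcard
  exact ⟨_, (isIndependent_traceFamily α).preimage e⟩

/-- The filter of points of `X` which, outside finite sets, lie in exactly those members of the
family `I` whose index belongs to `P`. -/
def patternFilter (I : ι → Set X) (P : Set ι) : Filter X :=
  (⨅ i, 𝓟 {x | x ∈ I i ↔ i ∈ P}) ⊓ cofinite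

theorem IsIndependent.patternFilter_neBot {I : ι → Set X} (hI : IsIndependent I) (P : Set ι) :
    (patternFilter I P).NeBot := by
  rw [patternFilter, inf_neBot_iff_frequently_left]
  intro p hp
  obtain ⟨t, ht, htp⟩ := (hasBasis_iInf_principal_finite _).eventually_iff.1 hp
  refine (frequently_cofinite_iff_infinite.2 (hI P t ht)).mono fun x hx ↦ htp ?_
  simpa using hx

theorem eventually_patternFilter_mem_iff (I : ι → Set X) (P : Set ι) (i : ι) :
    ∀ᶠ x in patternFilter I P, x ∈ I i ↔ i ∈ P :=
  mem_inf_of_left (mem_iInf_of_mem i (mem_principal_self _))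

theorem patternFilter_le_cofinite (I : ι → Set X) (P : Set ι) : patternFilter I P ≤ cofinite :=
  inf_le_right

end IndependentFamily

section ConvergentSubalgebra

variable {X : Type*} (𝕜 : Type*) [NormedField 𝕜]

/-- The indicator function of `s`, as an element of `ℓ^∞(X, 𝕜)`. -/
noncomputable def lInftyIndicator (s : Set X) : ℓ^∞(X, 𝕜) :=
  ⟨s.indicator 1, memℓp_infty ⟨1, by
    rintro _ ⟨x, rfl⟩
    simpa using norm_indicator_le_norm_self (s := s) (1 : X → 𝕜) x⟩⟩

@[simp]
theorem coe_lInftyIndicator (s : Set X) : ⇑(lInftyIndicator 𝕜 s) = s.indicator 1 := rfl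

theorem mul_lInftyIndicator_singleton (f : ℓ^∞(X, 𝕜)) (x : X) :
    f * lInftyIndicator 𝕜 {x} = f x • lInftyIndicator 𝕜 {x} := by
  ext y
  by_cases hy : y = x <;> simp [hy]

/-- Evaluation at `x`, as a ring homomorphism on `ℓ^∞(X, 𝕜)`. -/
@[simps]
def lInftyEval (x : X) : ℓ^∞(X, 𝕜) →+* 𝕜 where
  toFun f := f x
  map_one' := rfl
  map_mul' _ _ := rfl
  map_zero' := rfl
  map_add' _ _ := rfl

/-- The algebra of bounded functions on `X` which have a limit along the filter `F`. -/
def convergentSubalgebra (F : Filter X) : Subalgebra 𝕜 ℓ^∞(X, 𝕜) where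
  carrier := {f | ∃ c, Tendsto f F (𝓝 c)}
  mul_mem' := fun ⟨a, ha⟩ ⟨b, hb⟩ ↦ ⟨a * b, ha.mul hb⟩
  add_mem' := fun ⟨a, ha⟩ ⟨b, hb⟩ ↦ ⟨a + b, ha.add hb⟩
  algebraMap_mem' := fun r ↦ ⟨r, tendsto_const_nhds⟩

variable {𝕜}

theorem mem_convergentSubalgebra {F : Filter X} {f : ℓ^∞(X, 𝕜)} :
    f ∈ convergentSubalgebra 𝕜 F ↔ ∃ c, Tendsto f F (𝓝 c) := Iff.rfl

theorem isClosed_convergentSubalgebra [CompleteSpace 𝕜] (F : Filter X) [F.NeBot] :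
    IsClosed (convergentSubalgebra 𝕜 F : Set ℓ^∞(X, 𝕜)) := by
  refine isClosed_of_closure_subset fun f hf ↦ ?_
  rw [SetLike.mem_coe, mem_convergentSubalgebra, ← cauchy_map_iff_exists_tendsto,
    Metric.cauchy_iff]
  refine ⟨inferInstance, fun ε hε ↦ ?_⟩
  obtain ⟨g, ⟨c, hc⟩, hfg⟩ := Metric.mem_closure_iff.1 hf (ε / 4) (by positivity)
  have hnear : ∀ᶠ x in F, dist (f x) c < ε / 2 := by
    filter_upwards [Metric.tendsto_nhds.1 hc (ε / 4) (by positivity)] with x hx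
    have hfgx : dist (f x) (g x) ≤ dist f g := by
      simpa [dist_eq_norm] using lp.norm_apply_le_norm ENNReal.top_ne_zero (f - g) x
    linarith [dist_triangle (f x) (g x) c]
  refine ⟨_, image_mem_map hnear, ?_⟩
  rintro _ ⟨x, hx, rfl⟩ _ ⟨y, hy, rfl⟩
  rw [mem_ofPred_eq] at hx hy
  linarith [dist_triangle_right (f x) (f y) c]

theorem lInftyIndicator_singleton_mem_convergentSubalgebra {F : Filter X} (hF : F ≤ cofinite)
    (x : X) : lInftyIndicator 𝕜 {x} ∈ convergentSubalgebra 𝕜 F := by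
  refine ⟨0, tendsto_const_nhds.congr' ?_⟩
  filter_upwards [hF (finite_singleton x).compl_mem_cofinite] with y hy
  exact (indicator_of_notMem hy _).symm

theorem lInftyIndicator_mem_convergentSubalgebra_patternFilter_iff {ι : Type*} {I : ι → Set X}
    (hI : IsIndependent I) (P Q : Set ι) (i : ι) :
    lInftyIndicator 𝕜 (I i) ∈ convergentSubalgebra 𝕜 (patternFilter I P ⊔ patternFilter I Q) ↔
      (i ∈ P ↔ i ∈ Q) := by
  have hlim (P : Set ι) :
      Tendsto (lInftyIndicator 𝕜 (I i)) (patternFilter I P) (𝓝 (P.indicator 1 i)) := by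
    refine tendsto_const_nhds.congr' ?_
    filter_upwards [eventually_patternFilter_mem_iff I P i] with x hx
    by_cases hi : i ∈ P <;> simp [hx, hi]
  have := hI.patternFilter_neBot
  rw [mem_convergentSubalgebra]
  simp only [tendsto_sup]
  constructor
  · rintro ⟨c, hP, hQ⟩
    have := (tendsto_nhds_unique (hlim P) hP).trans (tendsto_nhds_unique hQ (hlim Q))
    by_cases hiP : i ∈ P <;> by_cases hiQ : i ∈ Q <;> simp_all
  · intro hPQ
    refine ⟨_, hlim P, ?_⟩
    convert hlim Q using 2
    by_cases hiQ : i ∈ Q <;> simp [hPQ, hiQ]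

theorem IsIndependent.injective_convergentSubalgebra {ι : Type*} {I : ι → Set X}
    (hI : IsIndependent I) :
    Injective fun P ↦ convergentSubalgebra 𝕜 (patternFilter I P ⊔ patternFilter I ∅) := by
  intro P Q hPQ
  ext i
  have hmem := lInftyIndicator_mem_convergentSubalgebra_patternFilter_iff (𝕜 := 𝕜) hI
  simpa [not_iff_not] using (hmem P ∅ i).symm.trans ((SetLike.ext_iff.1 hPQ _).trans (hmem Q ∅ i))

end ConvergentSubalgebra

section Rigidity

theorem ringHom_eq_of_mul_eq_smul {A : Type*} [Ring A] [Algebra ℝ A] (χ : A →+* ℝ) {a e : A}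
    {r : ℝ} (he : χ e = 1) (hae : a * e = r • e) : χ a = r := by
  have hχ : χ.comp (algebraMap ℝ A) = RingHom.id ℝ := Subsingleton.elim _ _
  calc χ a = χ (a * e) := by rw [map_mul, he, mul_one]
    _ = χ (algebraMap ℝ A r) * χ e := by rw [hae, Algebra.smul_def, map_mul]
    _ = r := by rw [he, mul_one]; exact RingHom.congr_fun hχ r

variable {X : Type*} {A B : Subalgebra ℝ ℓ^∞(X, ℝ)}

theorem subalgebra_le_of_ringHom (hA : ∀ x, lInftyIndicator ℝ {x} ∈ A)
    (hB : ∀ x, lInftyIndicator ℝ {x} ∈ B) (ψ : A →+* B)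
    (hψ : ∀ x, ψ ⟨_, hA x⟩ = ⟨_, hB x⟩) : A ≤ B := by
  intro f hf
  have hψf : (ψ ⟨f, hf⟩ : ℓ^∞(X, ℝ)) = f := by
    ext x
    let χ : A →+* ℝ := (lInftyEval ℝ x).comp (B.val.toRingHom.comp ψ)
    have hχ : χ ⟨_, hA x⟩ = 1 := by simp [χ, hψ]
    exact ringHom_eq_of_mul_eq_smul χ hχ (Subtype.ext (mul_lInftyIndicator_singleton ℝ f x))
  exact hψf ▸ (ψ ⟨f, hf⟩).2

theorem subalgebra_eq_of_ringEquiv {R : Type*} [NonAssocSemiring R]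
    (hA : ∀ x, lInftyIndicator ℝ {x} ∈ A) (hB : ∀ x, lInftyIndicator ℝ {x} ∈ B)
    (φ : A ≃+* R) (ψ : B ≃+* R) (h : ∀ x, φ ⟨_, hA x⟩ = ψ ⟨_, hB x⟩) : A = B :=
  le_antisymm
    (subalgebra_le_of_ringHom hA hB (φ.trans ψ.symm : A →+* B) fun x ↦ by simp [h])
    (subalgebra_le_of_ringHom hB hA (ψ.trans φ.symm : B →+* A) fun x ↦ by simp [← h])

end Rigidity

section Counting

theorem power_le_two_power_of_le {c κ : Cardinal.{u}} (hκ : ℵ₀ ≤ κ) (hc : c ≤ 2 ^ κ) :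
    c ^ κ ≤ 2 ^ κ :=
  calc c ^ κ ≤ (2 ^ κ) ^ κ := power_le_power_right hc
    _ = 2 ^ κ := by rw [← power_mul, mul_eq_self hκ]

theorem exists_isEmpty_ringEquiv_of_injective {X σ ι : Type u} [Infinite X]
    {A : σ → Subalgebra ℝ ℓ^∞(X, ℝ)} (hA : Injective A)
    (hsingle : ∀ s x, lInftyIndicator ℝ {x} ∈ A s) (hσ : 2 ^ #X < #σ)
    {R : ι → Type u} [∀ i, NonAssocSemiring (R i)] (hι : #ι ≤ 2 ^ #X)
    (hR : ∀ i, #(R i) ≤ 2 ^ #X) :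
    ∃ s, ∀ i, IsEmpty (A s ≃+* R i) := by
  by_contra! hcon
  have hcode : ∀ s, ∃ c : Σ i, X → R i, ∃ φ : A s ≃+* R c.1, ∀ x, φ ⟨_, hsingle s x⟩ = c.2 x :=
    fun s ↦ have ⟨i, ⟨φ⟩⟩ := hcon s
      ⟨⟨i, fun x ↦ φ ⟨_, hsingle s x⟩⟩, φ, fun _ ↦ rfl⟩
  choose c hc using hcode
  have hcinj : Injective c := by
    intro s s' hss'
    obtain ⟨φ, hφ⟩ := hc s
    obtain ⟨ψ, hψ⟩ := hss' ▸ hc s'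
    exact hA (subalgebra_eq_of_ringEquiv (hsingle s) (hsingle s') φ ψ fun x ↦ by rw [hφ, hψ])
  refine hσ.not_ge ?_
  calc #σ ≤ #(Σ i, X → R i) := mk_le_of_injective hcinj
    _ = sum fun i ↦ #(X → R i) := mk_sigma _
    _ ≤ sum fun _ : ι ↦ 2 ^ #X :=
      sum_le_sum _ _ fun i ↦ power_le_two_power_of_le (aleph0_le_mk X) (hR i)
    _ = #ι * 2 ^ #X := sum_const' _ _
    _ ≤ 2 ^ #X * 2 ^ #X := mul_le_mul' hι le_rfl
    _ = 2 ^ #X := by rw [← power_add, add_mk_eq_self]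

theorem exists_isClosed_subalgebra_isEmpty_ringEquiv (X : Type u) [Infinite X] {ι : Type u}
    {R : ι → Type u} [∀ i, NonAssocSemiring (R i)] (hι : #ι ≤ 2 ^ #X)
    (hR : ∀ i, #(R i) ≤ 2 ^ #X) :
    ∃ A : Subalgebra ℝ ℓ^∞(X, ℝ), IsClosed (A : Set ℓ^∞(X, ℝ)) ∧ ∀ i, IsEmpty (A ≃+* R i) := by
  obtain ⟨I, hI⟩ := exists_isIndependent X
  have := hI.patternFilter_neBot
  have hcofinite (P : Set (Set X)) : patternFilter I P ⊔ patternFilter I ∅ ≤ cofinite :=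
    sup_le (patternFilter_le_cofinite I P) (patternFilter_le_cofinite I ∅)
  have hcard : 2 ^ #X < #(Set (Set X)) := by simpa only [mk_set] using cantor (2 ^ #X)
  obtain ⟨P, hP⟩ := exists_isEmpty_ringEquiv_of_injective (hI.injective_convergentSubalgebra)
    (fun P ↦ lInftyIndicator_singleton_mem_convergentSubalgebra (hcofinite P)) hcard hι hR
  exact ⟨_, isClosed_convergentSubalgebra _, hP⟩

end Counting

section Calkin

variable {𝕜 : Type*} [NontriviallyNormedField 𝕜] {E F : Type*} [NormedAddCommGroup E]
  [NormedSpace 𝕜 E] [NormedAddCommGroup F] [NormedSpace 𝕜 F]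

theorem compactIdeal_ringCon_iff {f g : E →L[𝕜] E} :
    (compactIdeal 𝕜 E).ringCon f g ↔ IsCompactOperator (f - g) := by
  rw [TwoSidedIdeal.rel_iff]
  exact TwoSidedIdeal.mem_mk' _ _ _ _ _ _ _

theorem isCompactOperator_conj_iff (e : E ≃L[𝕜] F) {f : E →L[𝕜] E} :
    IsCompactOperator (e.conjContinuousAlgEquiv f) ↔ IsCompactOperator f := by
  constructor <;> intro h
  · convert! (h.comp_clm (e : E →L[𝕜] F)).clm_comp (e.symm : F →L[𝕜] E)
    ext; simp
  · exact (h.comp_clm (e.symm : F →L[𝕜] E)).clm_comp (e : E →L[𝕜] F)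

/-- The isomorphism of Calkin algebras induced by conjugation with an isomorphism of spaces. -/
noncomputable def calkinCongr (e : E ≃L[𝕜] F) : Calkin 𝕜 E ≃+* Calkin 𝕜 F :=
  RingCon.congr (e.conjContinuousAlgEquiv : (E →L[𝕜] E) ≃+* (F →L[𝕜] F)) <| by
    ext f g
    rw [RingCon.comap_rel, compactIdeal_ringCon_iff, compactIdeal_ringCon_iff]
    exact (isCompactOperator_conj_iff e (f := f - g)).symm.trans (by simp)

end Calkin

section ClosedSubspaces

variable {𝕜 : Type*} [NontriviallyNormedField 𝕜]

/-- The closed subspaces of `W` with a dense subset indexed by `X`. For `W = ℓ^∞(X, 𝕜)` they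
represent all Banach spaces having such a dense subset. -/
def ClosedSubspaceOfDensity (𝕜 W X : Type*) [NontriviallyNormedField 𝕜] [NormedAddCommGroup W]
    [NormedSpace 𝕜 W] : Type _ :=
  {V : Submodule 𝕜 W // IsClosed (V : Set W) ∧ ∃ d : X → V, DenseRange d}

theorem mk_closedSubspaceOfDensity_le {W X : Type u} [NormedAddCommGroup W] [NormedSpace 𝕜 W] :
    #(ClosedSubspaceOfDensity 𝕜 W X) ≤ #(X → W) := by
  have hclosure (V : ClosedSubspaceOfDensity 𝕜 W X) :
      ∃ d : X → W, closure (range d) = (V.1 : Set W) := by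
    obtain ⟨V, hV, d, hd⟩ := V
    refine ⟨Subtype.val ∘ d, ?_⟩
    calc closure (range (Subtype.val ∘ d)) = Subtype.val '' closure (range d) := by
          rw [range_comp]; exact hV.isClosedEmbedding_subtypeVal.closure_image_eq _
      _ = V := by simp [hd.closure_range]
  choose d hd using hclosure
  refine mk_le_of_injective (f := d) fun V V' h ↦ Subtype.ext (SetLike.coe_injective ?_)
  rw [← hd V, ← hd V', h]

theorem mk_calkin_le_mk_arrow {κ E : Type u} [NormedAddCommGroup E] [NormedSpace 𝕜 E]
    {d : κ → E} (hd : DenseRange d) : #(Calkin 𝕜 E) ≤ #(κ → E) := by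
  have hinj : Injective fun (T : E →L[𝕜] E) k ↦ T (d k) := fun S T hST ↦
    DFunLike.coe_injective (hd.equalizer S.continuous T.continuous hST)
  exact (mk_le_of_surjective (compactIdeal 𝕜 E).ringCon.mk'_surjective).trans
    (mk_le_of_injective hinj)

theorem mk_calkin_closedSubspaceOfDensity_le {W X : Type u} [NormedAddCommGroup W]
    [NormedSpace 𝕜 W] (V : ClosedSubspaceOfDensity 𝕜 W X) : #(Calkin 𝕜 V.1) ≤ #(X → W) :=
  have ⟨_, hd⟩ := V.2.2
  (mk_calkin_le_mk_arrow hd).trans (mk_le_of_injective Subtype.val_injective.comp_left)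

theorem exists_isClosed_subalgebra_isEmpty_ringEquiv_calkin (X : Type u) [Infinite X] {W : Type u}
    [NormedAddCommGroup W] [NormedSpace 𝕜 W] (hW : #W ≤ 2 ^ #X) :
    ∃ A : Subalgebra ℝ ℓ^∞(X, ℝ), IsClosed (A : Set ℓ^∞(X, ℝ)) ∧
      ∀ V : ClosedSubspaceOfDensity 𝕜 W X, IsEmpty (A ≃+* Calkin 𝕜 V.1) := by
  have hXW : #(X → W) ≤ 2 ^ #X := power_le_two_power_of_le (aleph0_le_mk X) hW
  exact exists_isClosed_subalgebra_isEmpty_ringEquiv X (mk_closedSubspaceOfDensity_le.trans hXW)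
    fun V ↦ (mk_calkin_closedSubspaceOfDensity_le V).trans hXW

end ClosedSubspaces

section Embedding

variable {𝕜 : Type*} [RCLike 𝕜] {E : Type*} [NormedAddCommGroup E] [NormedSpace 𝕜 E]

theorem exists_denseRange_of_mk_le {X α : Type u} [TopologicalSpace α] [Nonempty α] {D : Set α}
    (hD : Dense D) (hDX : #D ≤ #X) : ∃ d : X → α, DenseRange d := by
  obtain ⟨g⟩ : Nonempty (D ↪ X) := hDX
  have : Nonempty D := hD.nonempty.to_subtype
  exact ⟨_, hD.denseRange_val.comp (invFun_surjective g.injective).denseRange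
    continuous_subtype_val⟩

theorem nonempty_linearIsometry_lInfty {X : Type*} {d : X → E} (hd : DenseRange d) :
    Nonempty (E →ₗᵢ[𝕜] ℓ^∞(X, 𝕜)) := by
  choose f hf hfd using fun k ↦ exists_dual_vector'' 𝕜 (d k)
  have hbound (x : E) (k : X) : ‖f k x‖ ≤ ‖x‖ :=
    (f k).le_of_opNorm_le_of_le (hf k) le_rfl |>.trans_eq (one_mul _)
  let J : E →ₗ[𝕜] ℓ^∞(X, 𝕜) :=
    { toFun x := ⟨fun k ↦ f k x, memℓp_infty ⟨‖x‖, forall_mem_range.2 (hbound x)⟩⟩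
      map_add' x y := by ext k; exact map_add (f k) x y
      map_smul' c x := by ext k; exact map_smul (f k) c x }
  have hJ_le (x : E) : ‖J x‖ ≤ ‖x‖ := lp.norm_le_of_forall_le (norm_nonneg x) (hbound x)
  have hJ_cont : Continuous J := AddMonoidHomClass.continuous_of_bound J 1 (by simpa using hJ_le)
  refine ⟨⟨J, fun x ↦ hd.induction_on x (isClosed_eq hJ_cont.norm continuous_norm) fun k ↦ ?_⟩⟩
  refine (hJ_le (d k)).antisymm ?_
  calc ‖d k‖ = ‖J (d k) k‖ := by simp [J, hfd]
    _ ≤ ‖J (d k)‖ := lp.norm_apply_le_norm ENNReal.top_ne_zero _ k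

theorem exists_linearIsometryEquiv_closedSubspaceOfDensity [CompleteSpace E] {X : Type*}
    {d : X → E} (hd : DenseRange d) :
    ∃ V : ClosedSubspaceOfDensity 𝕜 ℓ^∞(X, 𝕜) X, Nonempty (E ≃ₗᵢ[𝕜] V.1) := by
  obtain ⟨J⟩ := nonempty_linearIsometry_lInfty (𝕜 := 𝕜) hd
  let e := J.equivRange
  exact ⟨⟨_, J.isometry.isClosedEmbedding.isClosed_range, e ∘ d,
    e.surjective.denseRange.comp hd e.continuous⟩, ⟨e⟩⟩

theorem mk_rclike_le_continuum {𝕜 : Type} [RCLike 𝕜] : #𝕜 ≤ 𝔠 := by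
  have hinj : Injective fun z : 𝕜 ↦ (RCLike.re z, RCLike.im z) := fun z w h ↦
    RCLike.ext (congrArg Prod.fst h) (congrArg Prod.snd h)
  simpa [mk_real] using mk_le_of_injective hinj

theorem mk_lInfty_le {𝕜 : Type} [RCLike 𝕜] {X : Type u} [Infinite X] :
    #ℓ^∞(X, 𝕜) ≤ 2 ^ #X := by
  have h𝕜 : lift.{u} #𝕜 ≤ 2 ^ #X :=
    calc lift.{u} #𝕜 ≤ 2 ^ ℵ₀ := by simpa using mk_rclike_le_continuum
      _ ≤ 2 ^ #X := power_le_power_left two_ne_zero (aleph0_le_mk X)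
  calc #ℓ^∞(X, 𝕜) ≤ #(X → 𝕜) := mk_le_of_injective Subtype.val_injective
    _ = lift.{u} #𝕜 ^ #X := by rw [mk_arrow, lift_uzero]
    _ ≤ 2 ^ #X := power_le_two_power_of_le (aleph0_le_mk X) h𝕜

end Embedding

end CalkinCounting

open CalkinCounting in
theorem statement0_general (𝕜 : Type) [RCLike 𝕜] (lam : Cardinal.{u})
    (hlam : Cardinal.aleph0 ≤ lam) :
    ∃ A : BundledBanachAlgebra.{u}, #A.carrier ≤ 2 ^ lam ∧
      ∀ (E : Type u) [NormedAddCommGroup E] [NormedSpace 𝕜 E] [CompleteSpace E],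
        (∃ D : Set E, Dense D ∧ #D ≤ lam) → IsEmpty (A.carrier ≃+* Calkin 𝕜 E) := by
  induction lam using Cardinal.inductionOn with | _ X
  have : Infinite X := infinite_iff.2 hlam
  obtain ⟨A, hA, hempty⟩ :=
    exists_isClosed_subalgebra_isEmpty_ringEquiv_calkin (𝕜 := 𝕜) X (mk_lInfty_le (𝕜 := 𝕜))
  have := hA.completeSpace_coe
  refine ⟨⟨A⟩, (mk_subtype_le _).trans mk_lInfty_le, fun E _ _ _ ⟨D, hD, hDX⟩ ↦ ⟨fun φ ↦ ?_⟩⟩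
  obtain ⟨d, hd⟩ := exists_denseRange_of_mk_le hD hDX
  obtain ⟨V, ⟨e⟩⟩ := exists_linearIsometryEquiv_closedSubspaceOfDensity (𝕜 := 𝕜) hd
  exact (hempty V).false (φ.trans (calkinCongr e.toContinuousLinearEquiv))

/-- For every infinite cardinal `λ` there exists a unital real Banach algebra `A` having a
dense subset of cardinality at most `2 ^ λ` such that for every real Banach space `E` having a
dense subset of cardinality at most `λ`, `A` is not isomorphic as a ring to the Calkin algebra
`B(E)/K(E)`. -/
theorem statement0 (lam : Cardinal.{u}) (hlam : Cardinal.aleph0 ≤ lam) :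
    ∃ A : BundledBanachAlgebra.{u},
      (∃ D : Set A.carrier, Dense D ∧ #D ≤ 2 ^ lam) ∧
      ∀ (E : Type u) [NormedAddCommGroup E] [NormedSpace ℝ E] [CompleteSpace E],
        (∃ D : Set E, Dense D ∧ #D ≤ lam) →
        IsEmpty (A.carrier ≃+* Calkin ℝ E) := by
  obtain ⟨A, hA, hempty⟩ := statement0_general ℝ lam hlam
  exact ⟨A, ⟨Set.univ, dense_univ, by rwa [mk_univ]⟩, hempty⟩
end

section
/- For every infinite cardinal λ there exists an ordinal α such that the Banach algebra C([0,α],ℝ) has a dense subset of cardinality at most 2^λ and, for every real Banach space E having a dense subset of cardinality at most λ, C([0,α],ℝ) is not isomorphic as a ring to the Calkin algebra B(E)/K(E). -/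
open Cardinal

/-- The ordinal interval `[0, α]`, i.e. the set of ordinals `≤ α`, with its (order) topology,
is a compact space. -/
instance (α : Ordinal.{u}) : CompactSpace (Set.Iic α) := by
  rw [← isCompact_iff_compactSpace, ← Set.Icc_bot]
  exact isCompact_Icc

/-!
Real Banach spaces with a dense subset of size `λ` are determined, up to isometric isomorphism, by
the distances between the points of that subset (the Mazur–Ulam theorem makes the resulting
isometry linear), so there are at most `2 ^ λ` of them, hence at most `2 ^ λ` Calkin algebras.

On the other hand, a ring isomorphism `C([0,α],ℝ) ≃ C([0,β],ℝ)` comes from a continuous injection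
`[0,β] → [0,α]`, and such an injection sends `ω ^ γ` to a point `≥ γ`, which forces
`β < ω ^ (α + 1)`. So, among the ordinals of cardinality at most `2 ^ λ`, those `α` for which
`C([0,α],ℝ)` is isomorphic to a given ring are bounded by such an ordinal, and the supremum of the
bounds for all `2 ^ λ` Calkin algebras is the required `α`.
-/

section OrdinalInterval

open Ordinal Order

theorem exists_add_omega0_opow_mem_Ioo {l ζ γ δ : Ordinal.{v}} (hδ : δ < γ)
    (hl : l < ζ + ω ^ γ) : ∃ ξ, ξ + ω ^ δ ∈ Set.Ioo l (ζ + ω ^ γ) := by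
  have hδ_pos : 0 < ω ^ δ := opow_pos δ omega0_pos
  have hsub : l - ζ < ω ^ γ := sub_lt_of_lt_add hl (opow_pos γ omega0_pos)
  have hstep : l - ζ + ω ^ δ < ω ^ γ :=
    isPrincipal_add_omega0_opow γ hsub ((opow_lt_opow_iff_right one_lt_omega0).2 hδ)
  refine ⟨ζ + (l - ζ), ?_, ?_⟩
  · exact (le_add_sub l ζ).trans_lt (lt_add_of_pos_right _ hδ_pos)
  · rw [add_assoc]
    gcongr

theorem le_apply_add_omega0_opow {β : Ordinal.{v}} {g : Set.Iic β → Ordinal.{v}}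
    (hg : Continuous g) (hinj : Function.Injective g) (γ ζ : Ordinal.{v})
    (h : ζ + ω ^ γ ≤ β) : γ ≤ g ⟨ζ + ω ^ γ, h⟩ := by
  induction γ using WellFoundedLT.induction generalizing ζ with
  | ind γ ih =>
    -- If `δ := g x < γ`, the points `ξ + ω ^ δ` accumulate at `x` from below; there `g` is `≥ δ` by
    -- induction and `≤ δ` by continuity, contradicting injectivity.
    set x : Set.Iic β := ⟨ζ + ω ^ γ, h⟩
    by_contra! hlt
    have hnear : g ⁻¹' Set.Iio (succ (g x)) ∈ nhds x :=
      hg.continuousAt.preimage_mem_nhds (Iio_mem_nhds (lt_succ (g x)))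
    have hpos : (⟨0, Set.mem_Iic.2 zero_le⟩ : Set.Iic β) < x :=
      Subtype.mk_lt_mk.2 ((opow_pos γ omega0_pos).trans_le le_add_self)
    obtain ⟨l, hl, hlx⟩ := exists_Ioc_subset_of_mem_nhds hnear ⟨_, hpos⟩
    obtain ⟨ξ, hlξ, hξx⟩ := exists_add_omega0_opow_mem_Ioo hlt (Subtype.coe_lt_coe.2 hl)
    have hξβ : ξ + ω ^ g x ≤ β := hξx.le.trans h
    have hge : g x ≤ g ⟨ξ + ω ^ g x, hξβ⟩ := ih (g x) hlt ξ hξβ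
    have hle : g ⟨ξ + ω ^ g x, hξβ⟩ ≤ g x := lt_succ_iff.1 (hlx ⟨hlξ, hξx.le⟩)
    exact hξx.ne (congrArg Subtype.val (hinj (hle.antisymm hge)))

theorem lt_omega0_opow_succ_of_injective {α β : Ordinal.{v}} (g : C(Set.Iic β, Set.Iic α))
    (hg : Function.Injective g) : β < ω ^ succ α := by
  by_contra! h
  have hle := le_apply_add_omega0_opow (continuous_subtype_val.comp g.continuous)
    (Subtype.val_injective.comp hg) (succ α) 0 (by rwa [zero_add])
  exact (hle.trans (g _).2).not_gt (lt_succ α)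

end OrdinalInterval

section ContinuousFunctions

variable {X Y : Type*} [TopologicalSpace X] [TopologicalSpace Y]

theorem ringHom_algebraMap_real {A : Type*} [Semiring A] [Algebra ℝ A] (φ : A →+* C(Y, ℝ)) (r : ℝ) :
    φ (algebraMap ℝ A r) = algebraMap ℝ C(Y, ℝ) r := by
  ext y
  have h : ((ContinuousMap.evalAlgHom ℝ ℝ y : C(Y, ℝ) →+* ℝ).comp φ).comp (algebraMap ℝ A) =
      RingHom.id ℝ := Subsingleton.elim _ _
  exact DFunLike.congr_fun h r

variable [CompactSpace X] [T2Space X] [CompactSpace Y]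

open WeakDual.CharacterSpace in
theorem exists_continuousMap_ringHom_eq_comp (φ : C(X, ℝ) →+* C(Y, ℝ)) :
    ∃ g : C(Y, X), ∀ f, φ f = f.comp g := by
  let ψ : C(X, ℝ) →⋆ₐ[ℝ] C(Y, ℝ) :=
    { φ with
      commutes' := ringHom_algebraMap_real φ
      map_star' := fun f => by simp }
  let g : C(Y, X) := ((homeoEval X ℝ).symm : C(_, X)).comp
    ((compContinuousMap ψ).comp (continuousMapEval Y ℝ))
  refine ⟨g, fun f => ContinuousMap.ext fun y => ?_⟩
  have hg : homeoEval X ℝ (g y) = compContinuousMap ψ (continuousMapEval Y ℝ y) :=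
    (homeoEval X ℝ).apply_symm_apply _
  exact (DFunLike.congr_fun hg f).symm

theorem exists_injective_continuousMap_of_ringHom_surjective [T2Space Y]
    {φ : C(X, ℝ) →+* C(Y, ℝ)} (hφ : Function.Surjective φ) :
    ∃ g : C(Y, X), Function.Injective g := by
  obtain ⟨g, hg⟩ := exists_continuousMap_ringHom_eq_comp φ
  refine ⟨g, fun a b hab => ?_⟩
  refine (WeakDual.CharacterSpace.homeoEval Y ℝ).injective (DFunLike.ext _ _ fun f => ?_)
  obtain ⟨f, rfl⟩ := hφ f
  change φ f a = φ f b
  rw [hg, ContinuousMap.comp_apply, ContinuousMap.comp_apply, hab]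

end ContinuousFunctions

section Density

theorem exists_dense_mk_le_of_separatesPoints {X : Type v} [TopologicalSpace X] [CompactSpace X]
    {S : Set C(X, ℝ)} (hS : ((fun f : C(X, ℝ) => (f : X → ℝ)) '' S).SeparatesPoints) :
    ∃ D : Set C(X, ℝ), Dense D ∧ #D ≤ max 𝔠 #S := by
  have hsep : (Algebra.adjoin ℝ S).SeparatesPoints := fun x y hxy =>
    let ⟨f, hf, hfxy⟩ := hS hxy
    ⟨f, Set.image_mono Algebra.subset_adjoin hf, hfxy⟩
  refine ⟨Algebra.adjoin ℝ S, ?_, ?_⟩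
  · rw [dense_iff_closure_eq, ← Subalgebra.topologicalClosure_coe,
      ContinuousMap.subalgebra_topologicalClosure_eq_top_of_separatesPoints _ hsep, Algebra.coe_top]
  · have hcard := Algebra.lift_cardinalMk_adjoin_le ℝ S
    rw [lift_uzero, lift_uzero, mk_real, lift_continuum] at hcard
    exact hcard.trans (max_le le_rfl (aleph0_le_continuum.trans (le_max_left _ _)))

variable {X : Type v} [TopologicalSpace X] [LinearOrder X] [OrderTopology X] [SuccOrder X]

theorem isClopen_Iic_of_succOrder (a : X) : IsClopen (Set.Iic a) := by
  refine ⟨isClosed_Iic, ?_⟩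
  by_cases ha : IsMax a
  · rw [ha.isTop.Iic_eq]
    exact isOpen_univ
  · rw [← Order.Iio_succ_of_not_isMax ha]
    exact isOpen_Iio

variable (X) in
theorem exists_dense_continuousMap_mk_le [CompactSpace X] :
    ∃ D : Set C(X, ℝ), Dense D ∧ #D ≤ max 𝔠 #X := by
  let χ : X → C(X, ℝ) := fun a => LocallyConstant.charFn ℝ (isClopen_Iic_of_succOrder a)
  have hχ (a b : X) (hab : a < b) : χ a a ≠ χ a b := by
    simp [χ, LocallyConstant.coe_charFn, hab]
  have hsep : ((fun f : C(X, ℝ) => (f : X → ℝ)) '' Set.range χ).SeparatesPoints := by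
    rintro a b hab
    rcases hab.lt_or_gt with h | h
    · exact ⟨χ a, ⟨χ a, ⟨a, rfl⟩, rfl⟩, hχ a b h⟩
    · exact ⟨χ b, ⟨χ b, ⟨b, rfl⟩, rfl⟩, (hχ b a h).symm⟩
  obtain ⟨D, hD, hcard⟩ := exists_dense_mk_le_of_separatesPoints hsep
  exact ⟨D, hD, hcard.trans (max_le_max_left 𝔠 mk_range_le)⟩

theorem exists_dense_continuousMap_Iic_mk_le {κ : Cardinal.{v}} (hκ : 𝔠 ≤ κ) {α : Ordinal.{v}}
    (hα : α.card ≤ κ) : ∃ D : Set C(Set.Iic α, ℝ), Dense D ∧ #D ≤ lift.{v + 1} κ := by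
  obtain ⟨D, hD, hcard⟩ := exists_dense_continuousMap_mk_le (Set.Iic α)
  have hIic : #(Set.Iic α) ≤ lift.{v + 1} κ := by
    rw [← Order.Iio_succ, mk_Iio_ordinal, lift_le, Order.succ_eq_add_one, Ordinal.card_add_one]
    exact add_le_of_le (aleph0_le_continuum.trans hκ) hα
      (one_le_aleph0.trans (aleph0_le_continuum.trans hκ))
  refine ⟨D, hD, hcard.trans (max_le ?_ hIic)⟩
  rwa [← lift_continuum.{v + 1, v}, lift_le]

end Density

section OrdinalPigeonhole

theorem exists_card_le_forall_not {κ : Cardinal.{v}} {ι : Type v} (hι : #ι ≤ κ)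
    {P : ι → Ordinal.{v} → Prop} {f : Ordinal.{v} → Ordinal.{v}}
    (hf : ∀ α, α.card ≤ κ → (f α).card ≤ κ) (hP : ∀ i α β, P i α → P i β → β < f α) :
    ∃ α : Ordinal.{v}, α.card ≤ κ ∧ ∀ i, ¬P i α := by
  have hbound (i : ι) : ∃ b : Ordinal.{v}, b.card ≤ κ ∧ ∀ α, α.card ≤ κ → P i α → α < b := by
    by_cases h : ∃ α, α.card ≤ κ ∧ P i α
    · obtain ⟨α, hα, hPα⟩ := h
      exact ⟨f α, hf α hα, fun β _ => hP i α β hPα⟩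
    · exact ⟨0, by simp, fun α hα hPα => (h ⟨α, hα, hPα⟩).elim⟩
  choose b hb hlt using hbound
  have hcard := Ordinal.card_iSup_le hι hb
  exact ⟨⨆ i, b i, hcard, fun i hPi => (hlt i _ hcard hPi).not_ge (Ordinal.le_iSup b i)⟩

theorem card_omega0_opow_succ_le {κ : Cardinal.{v}} (hκ : ℵ₀ ≤ κ) {α : Ordinal.{v}}
    (hα : α.card ≤ κ) : (Ordinal.omega0 ^ Order.succ α).card ≤ κ := by
  refine (Ordinal.card_opow_le _ _).trans (max_le hκ (max_le ?_ ?_))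
  · simpa using hκ
  · rw [Order.succ_eq_add_one, Ordinal.card_add_one]
    exact add_le_of_le hκ hα (one_le_aleph0.trans hκ)

theorem exists_card_le_forall_isEmpty_ringEquiv {κ : Cardinal.{v}} (hκ : ℵ₀ ≤ κ) {ι : Type v}
    (hι : #ι ≤ κ) (R : ι → Type*) [∀ i, NonAssocSemiring (R i)] :
    ∃ α : Ordinal.{v}, α.card ≤ κ ∧ ∀ i, IsEmpty (C(Set.Iic α, ℝ) ≃+* R i) := by
  simp only [← not_nonempty_iff]
  refine exists_card_le_forall_not hι (fun α => card_omega0_opow_succ_le hκ) ?_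
  rintro i α β ⟨e⟩ ⟨e'⟩
  obtain ⟨g, hg⟩ := exists_injective_continuousMap_of_ringHom_surjective
    (φ := (e.trans e'.symm : C(Set.Iic α, ℝ) →+* C(Set.Iic β, ℝ))) (e.trans e'.symm).surjective
  exact lt_omega0_opow_succ_of_injective g hg

end OrdinalPigeonhole

section BanachSpaces

theorem exists_denseRange_of_mk_le {L E : Type v} [TopologicalSpace E] [Nonempty E] {D : Set E}
    (hD : Dense D) (hcard : #D ≤ #L) : ∃ s : L → E, DenseRange s := by
  have := hD.nonempty.to_subtype
  obtain ⟨t, ht⟩ := Function.exists_surjective_iff.2 ⟨inferInstance, hcard⟩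
  exact ⟨_, hD.denseRange_val.comp ht.denseRange continuous_subtype_val⟩

theorem nonempty_isometryEquiv_of_dist_eq {L E F : Type*} [MetricSpace E] [CompleteSpace E]
    [MetricSpace F] [CompleteSpace F] {s : L → E} {t : L → F} (hs : DenseRange s)
    (ht : DenseRange t) (h : ∀ i j, dist (s i) (s j) = dist (t i) (t j)) :
    Nonempty (E ≃ᵢ F) := by
  let _ : PseudoMetricSpace L := PseudoMetricSpace.induced s inferInstance
  have hs_isom : Isometry s := Isometry.of_dist_eq fun i j => rfl
  have ht_isom : Isometry t := Isometry.of_dist_eq fun i j => (h i j).symm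
  let p : AbstractCompletion L :=
    ⟨E, s, inferInstance, inferInstance, inferInstance, hs_isom.isUniformInducing, hs⟩
  let q : AbstractCompletion L :=
    ⟨F, t, inferInstance, inferInstance, inferInstance, ht_isom.isUniformInducing, ht⟩
  let e : E ≃ᵤ F := p.compareEquiv q
  have he (i : L) : e (s i) = t i := p.compare_coe q i
  have he_cont : Continuous e := e.continuous
  have he_dist (x y : E) : dist (e x) (e y) = dist x y := by
    induction x, y using hs.induction_on₂ with
    | hp => exact isClosed_eq (by fun_prop) (by fun_prop)
    | h i j => rw [he, he, h]
  exact ⟨IsometryEquiv.mk e.toEquiv (Isometry.of_dist_eq he_dist)⟩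

theorem mk_pi_pi_real (L : Type v) [Infinite L] : #(L → L → ℝ) = 2 ^ #L := by
  calc #(L → L → ℝ) = (𝔠 ^ #L) ^ #L := by simp [mk_real]
    _ = 2 ^ (ℵ₀ * (#L * #L)) := by rw [← two_power_aleph0, power_mul, power_mul]
    _ = 2 ^ #L := by rw [mul_eq_self (aleph0_le_mk L), aleph0_mul_eq (aleph0_le_mk L)]

/-- `d` is the distance matrix of a dense family in some real Banach space. Such matrices code the
isometry classes of real Banach spaces having a dense subset of cardinality at most `#L`. -/
def IsBanachDistanceMatrix {L : Type v} (d : L → L → ℝ) : Prop :=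
  ∃ (E : Type v) (_ : NormedAddCommGroup E) (_ : NormedSpace ℝ E) (_ : CompleteSpace E)
    (s : L → E), DenseRange s ∧ ∀ i j, dist (s i) (s j) = d i j

theorem exists_family_nonempty_linearIsometryEquiv {lam : Cardinal.{v}} (hlam : ℵ₀ ≤ lam) :
    ∃ (ι : Type v) (F : ι → Type v) (_ : ∀ i, NormedAddCommGroup (F i))
      (_ : ∀ i, NormedSpace ℝ (F i)), #ι ≤ 2 ^ lam ∧
      ∀ (E : Type v) [NormedAddCommGroup E] [NormedSpace ℝ E] [CompleteSpace E],
        (∃ D : Set E, Dense D ∧ #D ≤ lam) → ∃ i, Nonempty (E ≃ₗᵢ[ℝ] F i) := by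
  induction lam using Cardinal.inductionOn with | _ L
  have : Infinite L := infinite_iff.2 hlam
  let ι := {d : L → L → ℝ // IsBanachDistanceMatrix d}
  choose F _ _ _ t ht hd using fun d : ι => d.2
  refine ⟨ι, F, inferInstance, inferInstance, (mk_subtype_le _).trans (mk_pi_pi_real L).le, ?_⟩
  rintro E _ _ _ ⟨D, hD, hcard⟩
  obtain ⟨s, hs⟩ := exists_denseRange_of_mk_le hD hcard
  let d : ι := ⟨fun i j => dist (s i) (s j), E, ‹_›, ‹_›, ‹_›, s, hs, fun _ _ => rfl⟩
  obtain ⟨e⟩ := nonempty_isometryEquiv_of_dist_eq hs (ht d) fun i j => (hd d i j).symm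
  exact ⟨d, ⟨e.toRealLinearIsometryEquiv⟩⟩

end BanachSpaces

section Calkin

variable {𝕜 E F : Type*} [NontriviallyNormedField 𝕜] [NormedAddCommGroup E] [NormedSpace 𝕜 E]
  [NormedAddCommGroup F] [NormedSpace 𝕜 F]

theorem mem_compactIdeal_iff {T : E →L[𝕜] E} : T ∈ compactIdeal 𝕜 E ↔ IsCompactOperator T :=
  TwoSidedIdeal.mem_mk' _ _ _ _ _ _ _

theorem isCompactOperator_conj_iff (e : E ≃L[𝕜] F) {T : E →L[𝕜] E} :
    IsCompactOperator (e.conjContinuousAlgEquiv T) ↔ IsCompactOperator T := by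
  refine ⟨fun h => ?_, fun h => (h.comp_clm (e.symm : F →L[𝕜] E)).clm_comp (e : E →L[𝕜] F)⟩
  have hT : e.symm.conjContinuousAlgEquiv (e.conjContinuousAlgEquiv T) = T :=
    e.conjContinuousAlgEquiv.symm_apply_apply T
  rw [← hT]
  exact (h.comp_clm (e : E →L[𝕜] F)).clm_comp (e.symm : F →L[𝕜] E)

/-- Linearly homeomorphic spaces have isomorphic Calkin algebras, by conjugation. -/
noncomputable def calkinCongr (e : E ≃L[𝕜] F) : Calkin 𝕜 E ≃+* Calkin 𝕜 F :=
  RingCon.congr (e.conjContinuousAlgEquiv : (E →L[𝕜] E) ≃+* (F →L[𝕜] F)) <| by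
    ext S T
    rw [RingCon.comap_rel, TwoSidedIdeal.rel_iff, TwoSidedIdeal.rel_iff, ← map_sub,
      mem_compactIdeal_iff, mem_compactIdeal_iff]
    exact (isCompactOperator_conj_iff e).symm

end Calkin

/-- For every infinite cardinal `λ` there exists an ordinal `α` such that the Banach algebra
`C([0,α], ℝ)` has a dense subset of cardinality at most `2 ^ λ` and, for every real Banach
space `E` having a dense subset of cardinality at most `λ`, `C([0,α], ℝ)` is not isomorphic
as a ring to the Calkin algebra `B(E)/K(E)`. -/
theorem statement1 (lam : Cardinal.{u}) (hlam : Cardinal.aleph0 ≤ lam) :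
    ∃ α : Ordinal.{u},
      (∃ D : Set C(Set.Iic α, ℝ), Dense D ∧ #D ≤ Cardinal.lift.{u + 1} (2 ^ lam)) ∧
      ∀ (E : Type u) [NormedAddCommGroup E] [NormedSpace ℝ E] [CompleteSpace E],
        (∃ D : Set E, Dense D ∧ #D ≤ lam) →
        IsEmpty (C(Set.Iic α, ℝ) ≃+* Calkin ℝ E) := by
  have hcont : 𝔠 ≤ (2 : Cardinal.{u}) ^ lam := by
    rw [← two_power_aleph0]
    exact power_le_power_left two_ne_zero hlam
  obtain ⟨ι, F, _, _, hι, hF⟩ := exists_family_nonempty_linearIsometryEquiv hlam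
  obtain ⟨α, hα, hempty⟩ := exists_card_le_forall_isEmpty_ringEquiv
    (aleph0_le_continuum.trans hcont) hι fun i => Calkin ℝ (F i)
  refine ⟨α, exists_dense_continuousMap_Iic_mk_le hcont hα, fun E _ _ _ hE => ⟨fun φ => ?_⟩⟩
  obtain ⟨i, ⟨e⟩⟩ := hF E hE
  exact (hempty i).false (φ.trans (calkinCongr e.toContinuousLinearEquiv))
end
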